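/- Let 2 ≤ k ≤ n. The general permutahedron Π_{n−1}(k−1) ⊆ ℝ^n has exactly (n−1)·n!/(2·(k−1)!) nonempty exposed faces of dimension 1 (edges), and every extreme point of Π_{n−1}(k−1) lies in exactly n−1 of these edges; thus Π_{n−1}(k−1) is a simple polytope of dimension n−1. -/

import Mathlib

open Pointwise

noncomputable section

/-- The simplex Δ_F ⊆ ℝ^n for F ⊆ {0,…,n−1}. -/
def stdSimplexOn (n : ℕ) (F : Finset (Fin n)) : Set (Fin n → ℝ) :=
  {x | (∀ i, 0 ≤ x i) ∧ (∀ i, i ∉ F → x i = 0) ∧ ∑ i, x i = 1}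

/-- The general permutahedron Π_{n−1}(k−1) ⊆ ℝ^n, Minkowski sum of all Δ_F with |F| = k. -/
def genPerm (n k : ℕ) : Set (Fin n → ℝ) :=
  ∑ F ∈ Finset.univ.powersetCard k, stdSimplexOn n F

/-- P_{n−1}(v): convex hull of the orbit of v under coordinate permutations. -/
def permPoly {n : ℕ} (v : Fin n → ℝ) : Set (Fin n → ℝ) :=
  convexHull ℝ {w | ∃ σ : Equiv.Perm (Fin n), w = v ∘ σ}

/-- Dimension of a subset of ℝ^n : dimension of its affine span. -/
def setDim {n : ℕ} (S : Set (Fin n → ℝ)) : ℕ :=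
  Module.finrank ℝ (affineSpan ℝ S).direction

/-- Nonempty exposed face of P : the maximizer set of some linear functional. -/
def IsExpFace {n : ℕ} (P A : Set (Fin n → ℝ)) : Prop :=
  A.Nonempty ∧ ∃ L : (Fin n → ℝ) →ₗ[ℝ] ℝ, A = {x ∈ P | ∀ y ∈ P, L y ≤ L x}

/-- Stirling numbers of the second kind. -/
def stirling2 : ℕ → ℕ → ℕ
  | 0, 0 => 1
  | 0, _ + 1 => 0
  | _ + 1, 0 => 0
  | n + 1, k + 1 => (k + 1) * stirling2 n (k + 1) + stirling2 n k

/-- i-th backward difference of u at position k. -/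
def bdiff {n : ℕ} (u : Fin n → ℝ) (i : ℕ) (k : Fin n) : ℝ :=
  ∑ j ∈ Finset.range (i + 1), (-1 : ℝ) ^ j * (i.choose j) *
    u ⟨(k : ℕ) - j, lt_of_le_of_lt (Nat.sub_le _ _) k.isLt⟩

/-- The number of chains A_1 ⊆ ⋯ ⊆ A_ℓ of nonempty exposed faces of P with dim A_i = s i. -/
def flagCount {n : ℕ} (P : Set (Fin n → ℝ)) (l : ℕ) (s : Fin l → ℕ) : ℕ :=
  Nat.card {A : Fin l → Set (Fin n → ℝ) //
    (∀ i, IsExpFace P (A i) ∧ setDim (A i) = s i) ∧ ∀ i j, i ≤ j → A i ⊆ A j}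

/-- The exponential (l+1)-flag polynomial of P ⊆ ℝ^n (a polytope of dimension n−1). -/
def xiFlag {n : ℕ} (P : Set (Fin n → ℝ)) (l : ℕ) (x : Fin (l + 1) → ℝ) : ℝ :=
  ∑ s : Fin (l + 1) → Fin n, if Monotone s then
    ((flagCount P (l + 1) (fun i => (s i : ℕ)) : ℝ) / (Nat.factorial (n - (s 0 : ℕ)))) *
      ∏ i : Fin (l + 1), x i ^ (if (i : ℕ) = 0 then (s i : ℕ) else
        (s i : ℕ) - (s ⟨(i : ℕ) - 1, lt_of_le_of_lt (Nat.sub_le _ _) i.isLt⟩ : ℕ))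
  else 0

/-- The standard permutahedron Π_{n−1} ⊆ ℝ^n. -/
def stdPermutahedron (n : ℕ) : Set (Fin n → ℝ) :=
  convexHull ℝ {w | ∃ σ : Equiv.Perm (Fin n), ∀ i, w i = ((σ i : ℕ) : ℝ) + 1}

/-- E_m(t) = ∑_{j=0}^m t^j/j!, the degree-m Taylor polynomial of exp. -/
def Etaylor (m : ℕ) (t : ℝ) : ℝ :=
  ∑ j ∈ Finset.range (m + 1), t ^ j / (Nat.factorial j)

end

/-!
A linear functional with increasing coefficients is maximized over each simplex `Δ_F` at the vertex
of the largest element of `F`, so `Π_{n-1}(m)` is the convex hull of the rearrangements of the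
vector `v j = j.choose m`.

For any vector `v`, the rearrangements of `v` lie on a sphere and are therefore the vertices of
their convex hull. A face containing `v` and another point is cut out by a functional `c` which, by
the rearrangement inequality, is ordered like `v` and has `c a = c b` for some consecutive values
`v a < v b`; it then contains the segment from `v` to `v ∘ swap a b`. Conversely, each such segment
is a face, exposed by the functional `v + v ∘ swap a b`. The edges at `v` thus correspond to the
pairs of consecutive values of `v`, and double counting incident vertices and edges gives the number
of edges.
-/

open Equiv Finset Matrix Module

section Faces

theorem convexHull_inter_eq_of_isExposed {E : Type*} [AddCommGroup E] [Module ℝ E]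
    [TopologicalSpace E] [T2Space E] [IsTopologicalAddGroup E] [ContinuousSMul ℝ E]
    [LocallyConvexSpace ℝ E] {S A : Set E} (hS : S.Finite)
    (hA : IsExposed ℝ (convexHull ℝ S) A) : convexHull ℝ (A ∩ S) = A := by
  have hAconv : Convex ℝ A := hA.convex (convex_convexHull ℝ S)
  have hAext : A.extremePoints ℝ ⊆ A ∩ S := fun x hx ↦
    ⟨hx.1, extremePoints_convexHull_subset (hA.isExtreme.extremePoints_subset_extremePoints hx)⟩
  refine (convexHull_min Set.inter_subset_left hAconv).antisymm ?_
  calc A = closure (convexHull ℝ (A.extremePoints ℝ)) :=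
        (closure_convexHull_extremePoints (hA.isCompact (hS.isCompact_convexHull ℝ)) hAconv).symm
    _ ⊆ convexHull ℝ (A ∩ S) :=
        closure_minimal (convexHull_mono hAext) ((hS.inter_of_right A).isClosed_convexHull ℝ)

theorem eq_or_eq_or_eq_of_collinear_of_mem_extremePoints {𝕜 E : Type*} [Field 𝕜] [LinearOrder 𝕜]
    [IsStrictOrderedRing 𝕜] [AddCommGroup E] [Module 𝕜 E] {P : Set E} {x y z : E}
    (h : Collinear 𝕜 {x, y, z}) (hx : x ∈ P.extremePoints 𝕜) (hy : y ∈ P.extremePoints 𝕜)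
    (hz : z ∈ P.extremePoints 𝕜) : x = y ∨ y = z ∨ z = x := by
  have endpoint {a b c : E} (ha : a ∈ P.extremePoints 𝕜) (hb : b ∈ P.extremePoints 𝕜)
      (hc : c ∈ P.extremePoints 𝕜) (hbtw : Wbtw 𝕜 a b c) : a = b ∨ c = b :=
    (mem_extremePoints_iff_forall_segment.1 hb).2 a ha.1 c hc.1 (mem_segment_iff_wbtw.2 hbtw)
  rcases h.wbtw_or_wbtw_or_wbtw with hxyz | hyzx | hzxy
  · exact (endpoint hx hy hz hxyz).imp_right fun h ↦ .inl h.symm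
  · exact .inr ((endpoint hy hz hx hyzx).imp_right Eq.symm)
  · rcases endpoint hz hx hy hzxy with h | h
    exacts [.inr (.inr h), .inl h.symm]

variable {n : ℕ} {P A S T : Set (Fin n → ℝ)}

theorem IsExpFace.isExposed (hA : IsExpFace P A) : IsExposed ℝ P A := by
  obtain ⟨-, L, rfl⟩ := hA
  exact fun _ ↦ ⟨L.toContinuousLinearMap, rfl⟩

theorem isExpFace_iff_dotProduct :
    IsExpFace P A ↔ A.Nonempty ∧ ∃ c, A = {x ∈ P | ∀ y ∈ P, c ⬝ᵥ y ≤ c ⬝ᵥ x} := by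
  rw [IsExpFace, (dotProductEquiv ℝ (Fin n)).surjective.exists]
  rfl

theorem IsExpFace.convexHull_inter (hS : S.Finite) (hA : IsExpFace (convexHull ℝ S) A) :
    convexHull ℝ (A ∩ S) = A :=
  convexHull_inter_eq_of_isExposed hS hA.isExposed

theorem isExpFace_convexHull_of_dotProduct (hS : S.Finite) (hT : T.Nonempty) (hTS : T ⊆ S)
    (c : Fin n → ℝ) (r : ℝ) (hle : ∀ x ∈ S, c ⬝ᵥ x ≤ r) (heq : ∀ x ∈ S, c ⬝ᵥ x = r ↔ x ∈ T) :
    IsExpFace (convexHull ℝ S) (convexHull ℝ T) := by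
  have hmax : ∀ y ∈ convexHull ℝ S, c ⬝ᵥ y ≤ r :=
    convexHull_min hle (convex_halfSpace_le (dotProductEquiv ℝ (Fin n) c).isLinear r)
  obtain ⟨t, ht⟩ := hT
  set A := {x ∈ convexHull ℝ S | ∀ y ∈ convexHull ℝ S, c ⬝ᵥ y ≤ c ⬝ᵥ x}
  have hmem : ∀ x ∈ S, x ∈ A ↔ x ∈ T := fun x hx ↦ by
    rw [← heq x hx]
    refine ⟨fun hxA ↦ (hle x hx).antisymm ?_, fun hxr ↦
      ⟨subset_convexHull ℝ S hx, fun y hy ↦ (hmax y hy).trans_eq hxr.symm⟩⟩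
    exact ((heq t (hTS ht)).2 ht).symm.trans_le (hxA.2 t (subset_convexHull ℝ S (hTS ht)))
  have hA : IsExpFace (convexHull ℝ S) A :=
    isExpFace_iff_dotProduct.2 ⟨⟨t, (hmem t (hTS ht)).2 ht⟩, c, rfl⟩
  have hAS : A ∩ S = T := by
    ext x
    exact ⟨fun hx ↦ (hmem x hx.2).1 hx.1, fun hx ↦ ⟨(hmem x (hTS hx)).2 hx, hTS hx⟩⟩
  rwa [← hAS, hA.convexHull_inter hS]

theorem finite_setOf_isExpFace_convexHull (hS : S.Finite) :
    {A | IsExpFace (convexHull ℝ S) A}.Finite :=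
  (hS.finite_subsets.image (convexHull ℝ)).subset fun A hA ↦
    ⟨A ∩ S, Set.inter_subset_right, hA.convexHull_inter hS⟩

theorem setDim_singleton (x : Fin n → ℝ) : setDim {x} = 0 := by
  rw [setDim, direction_affineSpan, vectorSpan_singleton, finrank_bot]

theorem setDim_segment {x y : Fin n → ℝ} (h : x ≠ y) : setDim (segment ℝ x y) = 1 := by
  rw [setDim, ← convexHull_pair, affineSpan_convexHull, direction_affineSpan, vectorSpan_pair_rev]
  exact finrank_span_singleton (vsub_ne_zero.2 h.symm)

/-- The edges of `P`: its nonempty exposed faces of dimension one. -/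
def edgeSet (P : Set (Fin n → ℝ)) : Set (Set (Fin n → ℝ)) :=
  {A | IsExpFace P A ∧ setDim A = 1}

theorem eq_segment_of_mem_edgeSet (hS : S.Finite)
    (hSext : S ⊆ (convexHull ℝ S).extremePoints ℝ) (hA : A ∈ edgeSet (convexHull ℝ S))
    {x y : Fin n → ℝ} (hx : x ∈ A ∩ S) (hy : y ∈ A ∩ S) (hxy : x ≠ y) : A = segment ℝ x y := by
  obtain ⟨hface, hdim⟩ := hA
  have hcol : Collinear ℝ A := by
    rw [collinear_iff_finrank_le_one, ← direction_affineSpan]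
    exact hdim.le
  have hAS : A ∩ S = {x, y} := by
    refine Set.Subset.antisymm (fun z hz ↦ ?_) (Set.pair_subset hx hy)
    have hxyz : Collinear ℝ {x, y, z} := hcol.subset <| by
      rintro _ (rfl | rfl | rfl)
      exacts [hx.1, hy.1, hz.1]
    rcases eq_or_eq_or_eq_of_collinear_of_mem_extremePoints hxyz (hSext hx.2) (hSext hy.2)
      (hSext hz.2) with h | h | h
    exacts [absurd h hxy, .inr h.symm, .inl h]
  rw [← convexHull_pair, ← hAS, hface.convexHull_inter hS]

theorem mem_convexHull_of_forall_exists_dotProduct_le (hS : S.Finite) {x : Fin n → ℝ}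
    (h : ∀ c : Fin n → ℝ, ∃ y ∈ S, c ⬝ᵥ x ≤ c ⬝ᵥ y) : x ∈ convexHull ℝ S := by
  by_contra hx
  obtain ⟨f, u, hSu, hux⟩ :=
    geometric_hahn_banach_closed_point (convex_convexHull ℝ S) (hS.isClosed_convexHull ℝ) hx
  obtain ⟨c, hc⟩ := (dotProductEquiv ℝ (Fin n)).surjective f.toLinearMap
  have hf (z) : c ⬝ᵥ z = f z := LinearMap.congr_fun hc z
  obtain ⟨y, hy, hxy⟩ := h c
  rw [hf, hf] at hxy
  exact (hux.trans_le hxy).not_gt (hSu y (subset_convexHull ℝ S hy))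

end Faces

section Orbit

variable {ι R : Type*}

/-- The rearrangements of `v`: its orbit under permutations of the coordinates. The polytope
`permPoly v` is the convex hull of this set. -/
def permOrbit (v : ι → R) : Set (ι → R) :=
  {w | ∃ σ : Perm ι, w = v ∘ σ}

theorem permOrbit_eq_orbit (v : ι → R) : permOrbit v = MulAction.orbit (Perm ι)ᵈᵐᵃ v :=
  Set.ext fun _ ↦ DomMulAct.mk.exists_congr fun _ ↦ eq_comm

theorem permOrbit_eq_of_mem {v w : ι → R} (hw : w ∈ permOrbit v) : permOrbit w = permOrbit v := by
  rw [permOrbit_eq_orbit] at hw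
  rw [permOrbit_eq_orbit, permOrbit_eq_orbit, MulAction.orbit_eq_iff.2 hw]

theorem self_mem_permOrbit (v : ι → R) : v ∈ permOrbit v :=
  ⟨1, rfl⟩

theorem comp_mem_permOrbit (v : ι → R) (σ : Perm ι) : v ∘ σ ∈ permOrbit v :=
  ⟨σ, rfl⟩

theorem finite_permOrbit [Finite ι] (v : ι → R) : (permOrbit v).Finite :=
  (Set.finite_range fun σ : Perm ι ↦ v ∘ σ).subset fun _ ⟨σ, h⟩ ↦ ⟨σ, h.symm⟩

theorem ncard_permOrbit_mul_card_fixing [Fintype ι] (v : ι → R) :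
    (permOrbit v).ncard * Nat.card {σ : Perm ι // v ∘ σ = v} = (Fintype.card ι).factorial := by
  classical
  have hstab : Nat.card {σ : Perm ι // v ∘ σ = v} =
      Nat.card (MulAction.stabilizer (Perm ι)ᵈᵐᵃ v) :=
    Nat.card_congr (DomMulAct.mk.subtypeEquiv fun _ ↦ Iff.rfl)
  rw [hstab, permOrbit_eq_orbit, ← MulAction.index_stabilizer, Subgroup.index_mul_card,
    Nat.card_congr DomMulAct.mk.symm, Nat.card_perm, Nat.card_eq_fintype_card]

theorem comp_swap_eq_add_smul [CommRing R] [DecidableEq ι] (v : ι → R) (a b : ι) :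
    v ∘ swap a b = v + (v b - v a) • (Pi.single a 1 - Pi.single b 1) := by
  ext i
  rcases eq_or_ne i a with rfl | hia
  · rcases eq_or_ne i b with rfl | hib <;> simp [*]
  · rcases eq_or_ne i b with rfl | hib <;> simp [swap_apply_of_ne_of_ne, *]

theorem single_sub_single_mem_vectorSpan_permOrbit [Field R] [DecidableEq ι] {v : ι → R}
    {a b : ι} (h : v a ≠ v b) (i j : ι) :
    Pi.single i 1 - Pi.single j 1 ∈ vectorSpan R (permOrbit v) := by
  rcases eq_or_ne i j with rfl | hij
  · simp
  obtain ⟨σ, hi, hj⟩ := MulAction.is_two_pretransitive_iff.1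
    (Perm.isMultiplyPretransitive ι 2) hij (ne_of_apply_ne v h)
  set w := v ∘ σ
  have hdiff := vsub_mem_vectorSpan R (permOrbit_eq_of_mem (comp_mem_permOrbit v σ) ▸
    comp_mem_permOrbit w (swap i j)) (comp_mem_permOrbit v σ)
  rw [vsub_eq_sub, comp_swap_eq_add_smul, add_sub_cancel_left] at hdiff
  have hw : w j - w i ≠ 0 := sub_ne_zero.2 <| by
    simpa [w, ← hi, ← hj] using h.symm
  exact (Submodule.smul_mem_iff _ hw).1 hdiff

theorem sum_eq_of_mem_permOrbit [Fintype ι] [AddCommMonoid R] {v w : ι → R}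
    (hw : w ∈ permOrbit v) : ∑ i, w i = ∑ i, v i := by
  obtain ⟨σ, rfl⟩ := hw
  exact Equiv.sum_comp σ v

theorem eq_or_eq_comp_swap [Finite ι] [DecidableEq ι] [CommRing R] {v w : ι → R} {a b : ι}
    (hab : a ≠ b) (hw : w ∈ permOrbit v) (h : ∀ i, w i = v i ∨ w i = (v ∘ swap a b) i) :
    w = v ∨ w = v ∘ swap a b := by
  cases nonempty_fintype ι
  have hoff (i) (hi : i ≠ a ∧ i ≠ b) : w i = v i := by
    simpa [swap_apply_of_ne_of_ne hi.1 hi.2] using h i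
  have hsum : (w a - v a) + (w b - v b) = 0 := by
    rw [← Fintype.sum_eq_add a b hab fun i hi ↦ sub_eq_zero.2 (hoff i hi), sum_sub_distrib,
      sum_eq_of_mem_permOrbit hw, sub_self]
  have hw_eq : w = v + (w a - v a) • (Pi.single a 1 - Pi.single b 1) := by
    ext i
    rcases eq_or_ne i a with rfl | hia
    · simp [hab]
    rcases eq_or_ne i b with rfl | hib
    · simp [hab.symm]
      linear_combination hsum
    · simp [hia, hib, hoff i ⟨hia, hib⟩]
  rcases h a with ha | ha
  · left
    rw [hw_eq, ha, sub_self, zero_smul, add_zero]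
  · right
    rw [hw_eq, ha, comp_swap_eq_add_smul]
    simp [hab]

variable [Fintype ι]

theorem dotProduct_self_of_mem_permOrbit [NonUnitalNonAssocSemiring R] {v w : ι → R}
    (hw : w ∈ permOrbit v) : w ⬝ᵥ w = v ⬝ᵥ v := by
  obtain ⟨σ, rfl⟩ := hw
  exact comp_equiv_dotProduct_comp_equiv v v σ

theorem dotProduct_le_of_mem_permOrbit [CommRing R] [LinearOrder R]
    [IsStrictOrderedRing R] {v w : ι → R} (hw : w ∈ permOrbit v) : v ⬝ᵥ w ≤ v ⬝ᵥ v := by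
  have hsq : 0 ≤ (w - v) ⬝ᵥ (w - v) := sum_nonneg fun i _ ↦ mul_self_nonneg _
  rw [sub_dotProduct, dotProduct_sub, dotProduct_sub, dotProduct_self_of_mem_permOrbit hw,
    dotProduct_comm w v] at hsq
  linarith

theorem dotProduct_eq_iff_of_mem_permOrbit [CommRing R] [LinearOrder R]
    [IsStrictOrderedRing R] {v w : ι → R} (hw : w ∈ permOrbit v) :
    v ⬝ᵥ w = v ⬝ᵥ v ↔ w = v := by
  refine ⟨fun h ↦ sub_eq_zero.1 (dotProduct_self_eq_zero.1 ?_), fun h ↦ by rw [h]⟩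
  rw [sub_dotProduct, dotProduct_sub, dotProduct_sub, dotProduct_self_of_mem_permOrbit hw,
    dotProduct_comm w v, h, sub_self]

variable [DecidableEq ι]

theorem dotProduct_comp_swap [CommRing R] (c v : ι → R) (a b : ι) :
    c ⬝ᵥ (v ∘ swap a b) = c ⬝ᵥ v + (v b - v a) * (c a - c b) := by
  simp [comp_swap_eq_add_smul, dotProduct_add, dotProduct_sub]

theorem monovary_of_dotProduct_comp_swap_le [CommRing R] [LinearOrder R]
    [IsStrictOrderedRing R] {c v : ι → R} (h : ∀ a b, c ⬝ᵥ (v ∘ swap a b) ≤ c ⬝ᵥ v) :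
    Monovary v c := by
  intro a b hab
  have hswap := h a b
  rw [dotProduct_comp_swap] at hswap
  by_contra! hba
  nlinarith

theorem vectorSpan_permOrbit [Field R] {v : ι → R} {a b : ι} (h : v a ≠ v b) :
    vectorSpan R (permOrbit v) = LinearMap.ker (dotProductEquiv R ι 1) := by
  apply le_antisymm
  · rw [vectorSpan_eq_span_vsub_set_right R (self_mem_permOrbit v), Submodule.span_le]
    rintro _ ⟨w, hw, rfl⟩
    simp [one_dotProduct, sum_eq_of_mem_permOrbit hw]
  · intro x hx
    have hsum : ∑ i, x i = 0 := by simpa [one_dotProduct] using hx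
    have hx_eq : x = ∑ i, x i • (Pi.single i 1 - Pi.single a 1) := by
      simp only [smul_sub, sum_sub_distrib, ← sum_smul, hsum, zero_smul, sub_zero]
      exact pi_eq_sum_univ' x
    rw [hx_eq]
    exact Submodule.sum_smul_mem _ _ fun i _ ↦ single_sub_single_mem_vectorSpan_permOrbit h i a

end Orbit

section Consecutive

variable {ι R : Type*} [LinearOrder R]

/-- `v a < v b` are consecutive among the values of `v`. The edges of `permPoly v` at `v` join `v`
to `v ∘ swap a b` for such pairs `a`, `b`. -/
def Consecutive (v : ι → R) (a b : ι) : Prop :=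
  v a < v b ∧ ∀ i, v i ≤ v a ∨ v b ≤ v i

theorem consecutive_comp_perm {v : ι → R} (σ : Perm ι) {a b : ι} :
    Consecutive (v ∘ σ) a b ↔ Consecutive v (σ a) (σ b) :=
  and_congr_right fun _ ↦ σ.forall_congr_left.trans (by simp)

theorem card_consecutive_of_mem_permOrbit {v w : ι → R} (hw : w ∈ permOrbit v) :
    Nat.card {p : ι × ι // Consecutive w p.1 p.2} =
      Nat.card {p : ι × ι // Consecutive v p.1 p.2} := by
  obtain ⟨σ, rfl⟩ := hw
  exact Nat.card_congr ((σ.prodCongr σ).subtypeEquiv fun _ ↦ consecutive_comp_perm σ)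

theorem exists_consecutive_of_monovary [Finite ι] {v c : ι → R} (hv : Monovary v c) {a b : ι}
    (hab : v a < v b) (hc : c a = c b) : ∃ d, Consecutive v a d ∧ c a = c d := by
  obtain ⟨d, ⟨had, hcd⟩, hmin⟩ :=
    Set.exists_min_image {d | v a < v d ∧ c a = c d} v (Set.toFinite _) ⟨b, hab, hc⟩
  refine ⟨d, ⟨had, fun i ↦ ?_⟩, hcd⟩
  by_contra! hi
  refine (hmin i ⟨hi.1, le_antisymm ?_ ?_⟩).not_gt hi.2
  · exact not_lt.1 fun hlt ↦ (hv hlt).not_gt hi.1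
  · exact not_lt.1 fun hlt ↦ (hv (hcd ▸ hlt)).not_gt hi.2

theorem eq_of_monovary_of_mem_permOrbit [CommRing R] [IsStrictOrderedRing R] [Finite ι]
    {v w : ι → R} (hw : w ∈ permOrbit v) (h : Monovary w v) : w = v := by
  cases nonempty_fintype ι
  obtain ⟨σ, rfl⟩ := hw
  refine (dotProduct_eq_iff_of_mem_permOrbit (comp_mem_permOrbit v σ)).1
    ((dotProduct_le_of_mem_permOrbit (comp_mem_permOrbit v σ)).antisymm ?_)
  have hrearr := h.sum_comp_perm_mul_le_sum_mul (σ := σ⁻¹)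
  simpa [dotProduct, mul_comm] using hrearr

theorem exists_lt_and_eq_of_monovary [CommRing R] [IsStrictOrderedRing R] [Finite ι]
    {v w c : ι → R} (hw : w ∈ permOrbit v) (hne : w ≠ v) (hvc : Monovary v c)
    (hwc : Monovary w c) : ∃ a b, v a < v b ∧ c a = c b := by
  contrapose! hne
  refine eq_of_monovary_of_mem_permOrbit hw fun a b hab ↦ hwc (lt_of_le_of_ne ?_ (hne a b hab))
  exact not_lt.1 fun hlt ↦ (hvc hlt).not_gt hab

theorem comp_swap_ne {v : ι → R} [DecidableEq ι] {a b : ι} (h : v a < v b) : v ∘ swap a b ≠ v :=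
  fun heq ↦ h.ne' (by simpa using congrFun heq a)

theorem comp_swap_inj [DecidableEq ι] {v : ι → R} {a b a' b' : ι} (hab : v a < v b)
    (hab' : v a' < v b') (h : v ∘ swap a b = v ∘ swap a' b') : a = a' ∧ b = b' := by
  have ha : v (swap a' b' a) = v b := by simpa using (congrFun h a).symm
  have hb : v (swap a' b' b) = v a := by simpa using (congrFun h b).symm
  grind

variable [DecidableEq ι]

theorem sub_mul_sub_nonneg_of_consecutive [CommRing R] [IsStrictOrderedRing R]
    {v w : ι → R} {a b : ι} (h : Consecutive v a b) (hw : w ∈ permOrbit v) (i : ι) :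
    0 ≤ (w i - v i) * (w i - (v ∘ swap a b) i) := by
  obtain ⟨σ, rfl⟩ := hw
  have hab := h.1
  rcases eq_or_ne i a with rfl | hia
  · simp only [Function.comp_apply, swap_apply_left]
    rcases h.2 (σ i) with hσ | hσ
    · exact mul_nonneg_of_nonpos_of_nonpos (by linarith) (by linarith)
    · exact mul_nonneg (by linarith) (by linarith)
  rcases eq_or_ne i b with rfl | hib
  · simp only [Function.comp_apply, swap_apply_right]
    rcases h.2 (σ i) with hσ | hσ
    · exact mul_nonneg_of_nonpos_of_nonpos (by linarith) (by linarith)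
    · exact mul_nonneg (by linarith) (by linarith)
  · simp only [Function.comp_apply, swap_apply_of_ne_of_ne hia hib]
    exact mul_self_nonneg _

end Consecutive

section PermPoly

variable {n : ℕ} {v w : Fin n → ℝ} {A : Set (Fin n → ℝ)} {a b : Fin n}

theorem permPoly_eq_convexHull (v : Fin n → ℝ) : permPoly v = convexHull ℝ (permOrbit v) :=
  rfl

theorem permPoly_eq_of_mem (hw : w ∈ permOrbit v) : permPoly w = permPoly v := by
  rw [permPoly_eq_convexHull, permPoly_eq_convexHull, permOrbit_eq_of_mem hw]

theorem isExpFace_permPoly_singleton (v : Fin n → ℝ) : IsExpFace (permPoly v) {v} := by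
  rw [← convexHull_singleton (𝕜 := ℝ) v]
  exact isExpFace_convexHull_of_dotProduct (finite_permOrbit v) (Set.singleton_nonempty v)
    (Set.singleton_subset_iff.2 (self_mem_permOrbit v)) v (v ⬝ᵥ v)
    (fun _ ↦ dotProduct_le_of_mem_permOrbit) fun _ ↦ dotProduct_eq_iff_of_mem_permOrbit

theorem extremePoints_permPoly (v : Fin n → ℝ) :
    (permPoly v).extremePoints ℝ = permOrbit v := by
  refine Set.Subset.antisymm extremePoints_convexHull_subset ?_
  intro w hw
  rw [← permPoly_eq_of_mem hw, ← isExtreme_singleton]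
  exact (isExpFace_permPoly_singleton w).isExposed.isExtreme

theorem isExpFace_permPoly_segment (h : Consecutive v a b) :
    IsExpFace (permPoly v) (segment ℝ v (v ∘ swap a b)) := by
  set u := v ∘ swap a b
  have hu : u ∈ permOrbit v := comp_mem_permOrbit v _
  -- All rearrangements have the same norm, so the functional `v + u` differs from a constant by
  -- `-(w - v) ⬝ᵥ (w - u)`, whose summands all have the same sign.
  have key (w) (hw : w ∈ permOrbit v) :
      (v + u) ⬝ᵥ w = (v ⬝ᵥ v + v ⬝ᵥ u) - ∑ i, (w i - v i) * (w i - u i) := by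
    have hexpand : ∑ i, (w i - v i) * (w i - u i) = (w - v) ⬝ᵥ (w - u) := rfl
    rw [hexpand, sub_dotProduct, dotProduct_sub, dotProduct_sub, add_dotProduct,
      dotProduct_self_of_mem_permOrbit hw, dotProduct_comm w u]
    ring
  have hterm (w) (hw : w ∈ permOrbit v) := sub_mul_sub_nonneg_of_consecutive h hw
  rw [← convexHull_pair]
  refine isExpFace_convexHull_of_dotProduct (finite_permOrbit v) (Set.insert_nonempty _ _)
    (Set.pair_subset (self_mem_permOrbit v) hu) (v + u) (v ⬝ᵥ v + v ⬝ᵥ u) (fun w hw ↦ ?_)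
    fun w hw ↦ ?_
  · rw [key w hw]
    exact sub_le_self _ (sum_nonneg fun i _ ↦ hterm w hw i)
  · rw [key w hw, sub_eq_self, sum_eq_zero_iff_of_nonneg fun i _ ↦ hterm w hw i]
    simp only [mem_univ, forall_const, mul_eq_zero, sub_eq_zero]
    refine ⟨eq_or_eq_comp_swap (fun hab ↦ h.1.ne (congrArg v hab)) hw, ?_⟩
    rintro (rfl | rfl) i
    exacts [.inl rfl, .inr rfl]

theorem exists_consecutive_comp_swap_mem (hA : IsExpFace (permPoly v) A) (hv : v ∈ A)
    (hne : A ≠ {v}) : ∃ a b, Consecutive v a b ∧ v ∘ swap a b ∈ A := by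
  obtain ⟨w, ⟨hwA, hw⟩, hwv⟩ : ∃ w ∈ A ∩ permOrbit v, w ≠ v := by
    by_contra! hall
    refine hne ?_
    rw [← hA.convexHull_inter (finite_permOrbit v),
      (Set.eq_singleton_iff_unique_mem.2 ⟨⟨hv, self_mem_permOrbit v⟩, hall⟩ :
        A ∩ permOrbit v = {v}), convexHull_singleton]
  obtain ⟨-, c, rfl⟩ := isExpFace_iff_dotProduct.1 hA
  have hmono (x) (hx : x ∈ permOrbit v)
      (hmax : ∀ y ∈ permPoly v, c ⬝ᵥ y ≤ c ⬝ᵥ x) : Monovary x c :=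
    monovary_of_dotProduct_comp_swap_le fun a b ↦ hmax _ <| by
      rw [← permPoly_eq_of_mem hx]
      exact subset_convexHull ℝ _ (comp_mem_permOrbit x _)
  have hvc := hmono v (self_mem_permOrbit v) hv.2
  obtain ⟨a, b, hab, hc⟩ := exists_lt_and_eq_of_monovary hw hwv hvc (hmono w hw hwA.2)
  obtain ⟨d, had, hcd⟩ := exists_consecutive_of_monovary hvc hab hc
  refine ⟨a, d, had, subset_convexHull ℝ _ (comp_mem_permOrbit v _), fun y hy ↦ ?_⟩
  rw [dotProduct_comp_swap, hcd, sub_self, mul_zero, add_zero]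
  exact hv.2 y hy

theorem mem_edgeSet_permPoly_and_mem_iff :
    A ∈ edgeSet (permPoly v) ∧ v ∈ A ↔
      ∃ a b, Consecutive v a b ∧ A = segment ℝ v (v ∘ swap a b) := by
  constructor
  · rintro ⟨hA, hv⟩
    have hne : A ≠ {v} := fun h ↦ by simpa [h, setDim_singleton] using hA.2
    obtain ⟨a, b, hab, hmem⟩ := exists_consecutive_comp_swap_mem hA.1 hv hne
    exact ⟨a, b, hab, eq_segment_of_mem_edgeSet (finite_permOrbit v) (extremePoints_permPoly v).ge
      hA ⟨hv, self_mem_permOrbit v⟩ ⟨hmem, comp_mem_permOrbit v _⟩ (comp_swap_ne hab.1).symm⟩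
  · rintro ⟨a, b, hab, rfl⟩
    exact ⟨⟨isExpFace_permPoly_segment hab, setDim_segment (comp_swap_ne hab.1).symm⟩,
      left_mem_segment ℝ _ _⟩

theorem segment_inter_permOrbit {u : Fin n → ℝ} (hw : w ∈ permOrbit v) (hu : u ∈ permOrbit v) :
    segment ℝ w u ∩ permOrbit v = {w, u} := by
  refine Set.Subset.antisymm ?_ (Set.pair_subset ⟨left_mem_segment ℝ w u, hw⟩
    ⟨right_mem_segment ℝ w u, hu⟩)
  rintro x ⟨hxseg, hx⟩
  rw [← extremePoints_permPoly, mem_extremePoints_iff_forall_segment] at hx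
  exact (hx.2 w (subset_convexHull ℝ _ hw) u (subset_convexHull ℝ _ hu) hxseg).imp
    Eq.symm Eq.symm

theorem card_edgeSet_permPoly_of_self_mem (v : Fin n → ℝ) :
    Nat.card {A // A ∈ edgeSet (permPoly v) ∧ v ∈ A} =
      Nat.card {p : Fin n × Fin n // Consecutive v p.1 p.2} := by
  symm
  refine Nat.card_congr (Equiv.ofBijective (fun p ↦ ⟨segment ℝ v (v ∘ swap p.1.1 p.1.2),
    mem_edgeSet_permPoly_and_mem_iff.2 ⟨_, _, p.2, rfl⟩⟩) ⟨?_, ?_⟩)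
  · rintro ⟨⟨a, b⟩, hab⟩ ⟨⟨a', b'⟩, hab'⟩ h
    have hseg : segment ℝ v (v ∘ swap a b) = segment ℝ v (v ∘ swap a' b') :=
      congrArg Subtype.val h
    have hmem : v ∘ swap a b ∈ ({v, v ∘ swap a' b'} : Set _) := by
      rw [← segment_inter_permOrbit (self_mem_permOrbit v) (comp_mem_permOrbit v _), ← hseg]
      exact ⟨right_mem_segment ℝ _ _, comp_mem_permOrbit v _⟩
    obtain ⟨rfl, rfl⟩ := comp_swap_inj hab.1 hab'.1 (hmem.resolve_left (comp_swap_ne hab.1))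
    rfl
  · rintro ⟨A, hA⟩
    obtain ⟨a, b, hab, rfl⟩ := mem_edgeSet_permPoly_and_mem_iff.1 hA
    exact ⟨⟨(a, b), hab⟩, rfl⟩

theorem card_edgeSet_permPoly_of_mem (hw : w ∈ permOrbit v) :
    Nat.card {A // A ∈ edgeSet (permPoly v) ∧ w ∈ A} =
      Nat.card {p : Fin n × Fin n // Consecutive v p.1 p.2} := by
  rw [← permPoly_eq_of_mem hw, card_edgeSet_permPoly_of_self_mem,
    card_consecutive_of_mem_permOrbit hw]

theorem ncard_inter_permOrbit_of_mem_edgeSet (hA : A ∈ edgeSet (permPoly v)) :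
    (A ∩ permOrbit v).ncard = 2 := by
  have hne : (A ∩ permOrbit v).Nonempty := by
    rw [← convexHull_nonempty_iff (𝕜 := ℝ), hA.1.convexHull_inter (finite_permOrbit v)]
    exact hA.1.1
  obtain ⟨w, hwA, hw⟩ := hne
  rw [← permPoly_eq_of_mem hw] at hA
  obtain ⟨a, b, hab, rfl⟩ := mem_edgeSet_permPoly_and_mem_iff.1 ⟨hA, hwA⟩
  rw [← permOrbit_eq_of_mem hw,
    segment_inter_permOrbit (self_mem_permOrbit w) (comp_mem_permOrbit w _),
    Set.ncard_pair (comp_swap_ne hab.1).symm]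

theorem ncard_permOrbit_mul_card_consecutive (v : Fin n → ℝ) :
    (permOrbit v).ncard * Nat.card {p : Fin n × Fin n // Consecutive v p.1 p.2} =
      Nat.card (edgeSet (permPoly v)) * 2 := by
  classical
  have hE : (edgeSet (permPoly v)).Finite :=
    (finite_setOf_isExpFace_convexHull (finite_permOrbit v)).subset fun _ ↦ And.left
  rw [Nat.card_coe_set_eq, Set.ncard_eq_toFinset_card _ (finite_permOrbit v),
    Set.ncard_eq_toFinset_card _ hE]
  refine card_mul_eq_card_mul (fun w A ↦ w ∈ A) (fun w hw ↦ ?_) fun A hA ↦ ?_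
  · rw [← card_edgeSet_permPoly_of_mem ((finite_permOrbit v).mem_toFinset.1 hw),
      Nat.subtype_card (bipartiteAbove (fun w A ↦ w ∈ A) hE.toFinset w)
        fun A ↦ by rw [mem_bipartiteAbove, hE.mem_toFinset]]
  · rw [← ncard_inter_permOrbit_of_mem_edgeSet (hE.mem_toFinset.1 hA), ← Set.ncard_coe_finset]
    congr 1
    ext w
    simp [bipartiteBelow, and_comm]

theorem setDim_permPoly (h : v a ≠ v b) : setDim (permPoly v) = n - 1 := by
  have hne : dotProductEquiv ℝ (Fin n) 1 ≠ 0 :=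
    (LinearEquiv.map_ne_zero_iff _).2 fun h1 ↦ one_ne_zero (congrFun h1 a)
  have hker := Dual.finrank_ker_add_one_of_ne_zero hne
  rw [finrank_fin_fun] at hker
  rw [setDim, permPoly_eq_convexHull, affineSpan_convexHull, direction_affineSpan,
    vectorSpan_permOrbit h]
  exact Nat.eq_sub_of_add_eq hker

end PermPoly

section ChooseVec

theorem choose_lt_choose_iff {m i j : ℕ} (hm : m ≠ 0) :
    i.choose m < j.choose m ↔ i < j ∧ m ≤ j := by
  constructor
  · intro h
    refine ⟨not_le.1 fun hji ↦ (Nat.choose_le_choose m hji).not_gt h, not_lt.1 fun hjm ↦ ?_⟩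
    exact Nat.not_lt_zero _ (Nat.choose_eq_zero_of_lt hjm ▸ h)
  · rintro ⟨hij, hmj⟩
    obtain ⟨j, rfl⟩ := Nat.exists_eq_succ_of_ne_zero (Nat.ne_zero_of_lt hij)
    obtain ⟨m, rfl⟩ := Nat.exists_eq_succ_of_ne_zero hm
    calc i.choose (m + 1) ≤ j.choose (m + 1) := Nat.choose_le_choose _ (Nat.le_of_lt_succ hij)
      _ < (j + 1).choose (m + 1) := by
        rw [Nat.choose_succ_succ']
        exact Nat.lt_add_of_pos_left (Nat.choose_pos (Nat.le_of_succ_le_succ hmj))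

/-- The vertex of `Π_{n-1}(m)` with weakly increasing coordinates: `j` is the largest element of
`j.choose m` of the subsets `F` with `m + 1` elements. -/
def chooseVec (n m : ℕ) : Fin n → ℝ :=
  fun j ↦ ((j : ℕ).choose m : ℝ)

variable {n m : ℕ}

theorem chooseVec_lt_chooseVec_iff (hm : m ≠ 0) {i j : Fin n} :
    chooseVec n m i < chooseVec n m j ↔ i < j ∧ m ≤ j := by
  rw [chooseVec, chooseVec, Nat.cast_lt, choose_lt_choose_iff hm, Fin.lt_def]

theorem consecutive_chooseVec_iff (hm : m ≠ 0) {a b : Fin n} :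
    Consecutive (chooseVec n m) a b ↔ (b : ℕ) = max (a + 1 : ℕ) m := by
  simp only [Consecutive, ← not_lt, ← not_and_or, chooseVec_lt_chooseVec_iff hm, Fin.lt_def]
  refine ⟨fun ⟨hab, hmin⟩ ↦ ?_, fun hb ↦ ⟨by omega, fun i ↦ by omega⟩⟩
  have hle : max (a + 1 : ℕ) m ≤ b := max_le hab.1 (not_lt.1 hab.2)
  have hgap := hmin ⟨max (a + 1 : ℕ) m, hle.trans_lt b.isLt⟩
  simp only at hgap
  omega

theorem card_consecutive_chooseVec (hm : m ≠ 0) (hmn : m < n) :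
    Nat.card {p : Fin n × Fin n // Consecutive (chooseVec n m) p.1 p.2} = n - 1 := by
  simp only [consecutive_chooseVec_iff hm]
  rw [← Nat.card_fin (n - 1)]
  symm
  refine Nat.card_congr (Equiv.ofBijective (fun i ↦
    ⟨(⟨i, by omega⟩, ⟨max (i + 1 : ℕ) m, by omega⟩), rfl⟩) ⟨fun i j hij ↦ ?_, ?_⟩)
  · exact Fin.ext (congrArg (fun p ↦ (p.1.1 : ℕ)) hij)
  · rintro ⟨⟨a, b⟩, hab⟩
    exact ⟨⟨a, by simp only at hab; omega⟩, Subtype.ext (Prod.ext rfl (Fin.ext hab.symm))⟩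

theorem chooseVec_comp_perm_eq_iff (hm : m ≠ 0) (σ : Perm (Fin n)) :
    chooseVec n m ∘ σ = chooseVec n m ↔ ∀ j : Fin n, ¬ (j : ℕ) < m → σ j = j := by
  constructor
  · intro h j hj
    have hval : chooseVec n m (σ j) = chooseVec n m j := congrFun h j
    rcases lt_trichotomy (σ j) j with hlt | heq | hgt
    · exact absurd hval ((chooseVec_lt_chooseVec_iff hm).2 ⟨hlt, not_lt.1 hj⟩).ne
    · exact heq
    · exact absurd hval
        ((chooseVec_lt_chooseVec_iff hm).2 ⟨hgt, (not_lt.1 hj).trans hgt.le⟩).ne'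
  · intro h
    ext j
    by_cases hj : (j : ℕ) < m
    · have hσj : (σ j : ℕ) < m := by
        by_contra hσ
        exact hσ ((σ.injective (h _ hσ)).symm ▸ hj)
      simp [chooseVec, Nat.choose_eq_zero_of_lt, hj, hσj]
    · rw [Function.comp_apply, h j hj]

theorem card_perm_fixing_chooseVec (hm : m ≠ 0) (hmn : m ≤ n) :
    Nat.card {σ : Perm (Fin n) // chooseVec n m ∘ σ = chooseVec n m} = m.factorial := by
  rw [Nat.card_congr ((subtypeEquivRight (chooseVec_comp_perm_eq_iff hm)).trans
    (Perm.subtypeEquivSubtypePerm fun j : Fin n ↦ (j : ℕ) < m).symm), Nat.card_perm,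
    Nat.card_eq_fintype_card, Fintype.card_subtype, Fin.card_filter_val_lt, min_eq_right hmn]

theorem card_edgeSet_permPoly_chooseVec_mul (hm : m ≠ 0) (hmn : m < n) :
    Nat.card (edgeSet (permPoly (chooseVec n m))) * (2 * m.factorial) =
      (n - 1) * n.factorial := by
  have hedges := ncard_permOrbit_mul_card_consecutive (chooseVec n m)
  have horbit := ncard_permOrbit_mul_card_fixing (chooseVec n m)
  rw [card_consecutive_chooseVec hm hmn] at hedges
  rw [card_perm_fixing_chooseVec hm hmn.le, Fintype.card_fin] at horbit
  rw [← mul_assoc, ← hedges, ← horbit]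
  ring

end ChooseVec

section GenPerm

theorem card_filter_isGreatest_powersetCard {α : Type*} [LinearOrder α] [Fintype α]
    [LocallyFiniteOrderBot α] (m : ℕ) (i : α)
    [DecidablePred fun F : Finset α ↦ IsGreatest (F : Set α) i] :
    #{F ∈ powersetCard (m + 1) univ | IsGreatest ((F : Finset α) : Set α) i} =
      (#(Iio i)).choose m := by
  rw [← card_powersetCard]
  refine card_nbij' (fun F ↦ F.erase i) (fun G ↦ insert i G) ?_ ?_ ?_ ?_
  · intro F hF
    simp only [mem_coe, mem_filter, mem_powersetCard_univ] at hF
    obtain ⟨hcard, hi, hub⟩ := hF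
    refine mem_powersetCard.2 ⟨fun j hj ↦ ?_, by rw [card_erase_of_mem hi, hcard]; rfl⟩
    exact mem_Iio.2 ((hub (mem_of_mem_erase hj)).lt_of_ne (ne_of_mem_erase hj))
  · intro G hG
    obtain ⟨hsub, hcard⟩ := mem_powersetCard.1 hG
    have hi : i ∉ G := fun hi ↦ (mem_Iio.1 (hsub hi)).false
    simp only [mem_coe, mem_filter, mem_powersetCard_univ]
    refine ⟨by rw [card_insert_of_notMem hi, hcard], mem_insert_self i G, fun j hj ↦ ?_⟩
    rcases mem_insert.1 hj with rfl | hj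
    exacts [le_rfl, (mem_Iio.1 (hsub hj)).le]
  · intro F hF
    exact insert_erase (mem_filter.1 hF).2.1
  · intro G hG
    exact erase_insert fun hi ↦ (mem_Iio.1 ((mem_powersetCard.1 hG).1 hi)).false

variable {n : ℕ} {F : Finset (Fin n)} {c x : Fin n → ℝ}

open Classical in
/-- The vertex of the simplex `Δ_F` at the largest element of `F` (zero if `F` is empty). It
maximizes over `Δ_F` every linear functional with weakly increasing coefficients. -/
noncomputable def topVertex (F : Finset (Fin n)) : Fin n → ℝ :=
  fun i ↦ if IsGreatest (F : Set (Fin n)) i then 1 else 0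

theorem topVertex_eq_single (hF : F.Nonempty) : topVertex F = Pi.single (F.max' hF) 1 := by
  ext i
  simp only [topVertex, Pi.single_apply, (F.isGreatest_max' hF).isGreatest_iff_eq, eq_comm]

theorem sum_topVertex_powersetCard (n m : ℕ) :
    ∑ F ∈ powersetCard (m + 1) univ, topVertex F = chooseVec n m := by
  classical
  ext i
  simp only [Finset.sum_apply, topVertex, sum_boole, chooseVec]
  rw [card_filter_isGreatest_powersetCard, Fin.card_Iio]

theorem topVertex_mem_stdSimplexOn (hF : F.Nonempty) : topVertex F ∈ stdSimplexOn n F := by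
  rw [topVertex_eq_single hF]
  obtain ⟨hnonneg, hsum⟩ := single_mem_stdSimplex ℝ (F.max' hF)
  exact ⟨hnonneg,
    fun i hi ↦ Pi.single_eq_of_ne (ne_of_mem_of_not_mem (F.max'_mem hF) hi).symm 1, hsum⟩

theorem dotProduct_le_dotProduct_topVertex (hc : Monotone c) (hF : F.Nonempty)
    (hx : x ∈ stdSimplexOn n F) : c ⬝ᵥ x ≤ c ⬝ᵥ topVertex F := by
  obtain ⟨hnonneg, hzero, hsum⟩ := hx
  have hterm (i) : c i * x i ≤ c (F.max' hF) * x i := by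
    by_cases hi : i ∈ F
    · exact mul_le_mul_of_nonneg_right (hc (F.le_max' i hi)) (hnonneg i)
    · simp [hzero i hi]
  calc c ⬝ᵥ x ≤ ∑ i, c (F.max' hF) * x i := sum_le_sum fun i _ ↦ hterm i
    _ = c (F.max' hF) := by rw [← mul_sum, hsum, mul_one]
    _ = c ⬝ᵥ topVertex F := by rw [topVertex_eq_single hF, dotProduct_single_one]

theorem convex_stdSimplexOn (n : ℕ) (F : Finset (Fin n)) : Convex ℝ (stdSimplexOn n F) :=
  fun x hx y hy a b ha hb hab ↦
    ⟨fun i ↦ add_nonneg (mul_nonneg ha (hx.1 i)) (mul_nonneg hb (hy.1 i)),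
      fun i hi ↦ by simp [hx.2.1 i hi, hy.2.1 i hi],
      by simp [sum_add_distrib, ← mul_sum, hx.2.2, hy.2.2, hab]⟩

theorem convex_genPerm (n k : ℕ) : Convex ℝ (genPerm n k) :=
  sum_induction _ _ (fun _ _ ↦ Convex.add) (convex_singleton 0) fun F _ ↦ convex_stdSimplexOn n F

theorem comp_perm_mem_stdSimplexOn (σ : Perm (Fin n))
    (hx : x ∈ stdSimplexOn n (F.map σ.toEmbedding)) : x ∘ σ ∈ stdSimplexOn n F :=
  ⟨fun i ↦ hx.1 (σ i), fun i hi ↦ hx.2.1 (σ i) (by simpa using hi),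
    (Equiv.sum_comp σ x).trans hx.2.2⟩

theorem comp_perm_mem_genPerm {k : ℕ} (hx : x ∈ genPerm n k) (σ : Perm (Fin n)) :
    x ∘ σ ∈ genPerm n k := by
  obtain ⟨g, hg, rfl⟩ := (Set.mem_finsetSum _ _ _).1 hx
  have hsum : (∑ F ∈ powersetCard k univ, g F) ∘ σ =
      ∑ F ∈ powersetCard k univ, g (F.map σ.toEmbedding) ∘ σ := by
    ext i
    simp only [Function.comp_apply, Finset.sum_apply]
    exact (sum_equiv (t := powersetCard k univ) σ.finsetCongr (by simp) fun _ _ ↦ rfl).symm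
  rw [hsum]
  exact Set.finsetSum_mem_finsetSum _ _ _ fun F hF ↦
    comp_perm_mem_stdSimplexOn σ (hg (by simpa using hF))

theorem chooseVec_mem_genPerm (n m : ℕ) : chooseVec n m ∈ genPerm n (m + 1) := by
  rw [← sum_topVertex_powersetCard]
  exact Set.finsetSum_mem_finsetSum _ _ _ fun F hF ↦
    topVertex_mem_stdSimplexOn (card_pos.1 ((mem_powersetCard_univ.1 hF).symm ▸ m.succ_pos))

theorem dotProduct_le_dotProduct_chooseVec {m : ℕ} (hc : Monotone c)
    (hx : x ∈ genPerm n (m + 1)) : c ⬝ᵥ x ≤ c ⬝ᵥ chooseVec n m := by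
  obtain ⟨g, hg, rfl⟩ := (Set.mem_finsetSum _ _ _).1 hx
  rw [← sum_topVertex_powersetCard, dotProduct_sum, dotProduct_sum]
  exact sum_le_sum fun F hF ↦ dotProduct_le_dotProduct_topVertex hc
    (card_pos.1 ((mem_powersetCard_univ.1 hF).symm ▸ m.succ_pos)) (hg hF)

theorem genPerm_eq_permPoly (n m : ℕ) : genPerm n (m + 1) = permPoly (chooseVec n m) := by
  refine Set.Subset.antisymm (fun x hx ↦ ?_) (convexHull_min ?_ (convex_genPerm n _))
  · refine mem_convexHull_of_forall_exists_dotProduct_le (finite_permOrbit _) fun c ↦ ?_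
    set s := Tuple.sort c
    refine ⟨chooseVec n m ∘ s.symm, comp_mem_permOrbit _ _, ?_⟩
    calc c ⬝ᵥ x = (c ∘ s) ⬝ᵥ (x ∘ s) := (comp_equiv_dotProduct_comp_equiv c x s).symm
      _ ≤ (c ∘ s) ⬝ᵥ chooseVec n m :=
        dotProduct_le_dotProduct_chooseVec (Tuple.monotone_sort c) (comp_perm_mem_genPerm hx s)
      _ = c ⬝ᵥ (chooseVec n m ∘ s.symm) := by rw [dotProduct_comp_equiv_symm]
  · rintro _ ⟨σ, rfl⟩
    exact comp_perm_mem_genPerm (chooseVec_mem_genPerm n m) σ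

end GenPerm

/-- Π_{n−1}(k−1) has exactly (n−1)·n!/(2·(k−1)!) edges
(1-dimensional nonempty exposed faces), every vertex lies on exactly n−1 of
them, and Π_{n−1}(k−1) is a polytope of dimension n−1 (hence simple). -/
theorem genPerm_edges_simple (n k : ℕ) (hk : 2 ≤ k) (hkn : k ≤ n) :
    Nat.card {A : Set (Fin n → ℝ) // IsExpFace (genPerm n k) A ∧ setDim A = 1}
      = (n - 1) * Nat.factorial n / (2 * Nat.factorial (k - 1)) ∧
    (∀ u ∈ Set.extremePoints ℝ (genPerm n k),
      Nat.card {A : Set (Fin n → ℝ) //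
        IsExpFace (genPerm n k) A ∧ setDim A = 1 ∧ u ∈ A} = n - 1) ∧
    setDim (genPerm n k) = n - 1 := by
  obtain ⟨m, rfl⟩ := Nat.exists_eq_add_of_le' (one_le_two.trans hk)
  have hm : m ≠ 0 := Nat.ne_of_gt (Nat.le_of_succ_le_succ hk)
  have hmn : m < n := hkn
  rw [genPerm_eq_permPoly, extremePoints_permPoly, Nat.add_sub_cancel]
  refine ⟨?_, fun u hu ↦ ?_, ?_⟩
  · exact Nat.eq_div_of_mul_eq_left (by positivity) (card_edgeSet_permPoly_chooseVec_mul hm hmn)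
  · simpa only [edgeSet, Set.mem_ofPred_eq, and_assoc] using
      (card_edgeSet_permPoly_of_mem hu).trans (card_consecutive_chooseVec hm hmn)
  · have hlt : chooseVec n m ⟨0, hm.pos.trans hmn⟩ < chooseVec n m ⟨m, hmn⟩ :=
      (chooseVec_lt_chooseVec_iff hm).2 ⟨hm.pos, le_rfl⟩
    exact setDim_permPoly hlt.ne
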